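/- Let G be the free group on generators a_1,…,a_n, let H be a free group, and let φ : G → H be a homomorphism that has remnant (i.e. the tuple (φ(a_1),…,φ(a_n)) has remnant). Then φ is injective. -/

import Mathlib

/-- Half the total cancellation in the product `x * y` of elements of a free group:
`(|x| + |y| - |x*y|) / 2`. -/
def cancelLen {β : Type} [DecidableEq β] (x y : FreeGroup β) : ℕ :=
  (FreeGroup.norm x + FreeGroup.norm y - FreeGroup.norm (x * y)) / 2

/-- `x` or `x⁻¹`, according to the sign `b` (`true` = exponent `1`, `false` = exponent `-1`). -/
def pmPow {β : Type} [DecidableEq β] (b : Bool) (x : FreeGroup β) : FreeGroup β :=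
  if b then x else x⁻¹

/-- The left cancellation `L_i` of the `i`-th entry of the tuple `t`: the maximum of
`(|h_j^α| + |h_i| - |h_j^α * h_i|)/2` over pairs `(j, α)` with `(j, α) ≠ (i, -1)`. -/
def leftCancel {β : Type} [DecidableEq β] {N : ℕ} (t : Fin N → FreeGroup β) (i : Fin N) : ℕ :=
  Finset.univ.sup fun p : Fin N × Bool =>
    if p.1 = i ∧ p.2 = false then 0 else cancelLen (pmPow p.2 (t p.1)) (t i)

/-- The right cancellation `R_i` of the `i`-th entry of the tuple `t`: the maximum of
`(|h_i| + |h_k^β| - |h_i * h_k^β|)/2` over pairs `(k, β)` with `(k, β) ≠ (i, -1)`. -/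
def rightCancel {β : Type} [DecidableEq β] {N : ℕ} (t : Fin N → FreeGroup β) (i : Fin N) : ℕ :=
  Finset.univ.sup fun p : Fin N × Bool =>
    if p.1 = i ∧ p.2 = false then 0 else cancelLen (t i) (pmPow p.2 (t p.1))

/-- The remnant length `|Rem_t h_i| = |h_i| - L_i - R_i` of the `i`-th entry of `t`. -/
def remLen {β : Type} [DecidableEq β] {N : ℕ} (t : Fin N → FreeGroup β) (i : Fin N) : ℕ :=
  FreeGroup.norm (t i) - leftCancel t i - rightCancel t i

/-- A tuple has remnant if `|h_i| - L_i - R_i ≥ 1` for all `i`. -/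
def HasRemnant {β : Type} [DecidableEq β] {N : ℕ} (t : Fin N → FreeGroup β) : Prop :=
  ∀ i, 1 ≤ remLen t i

/-- Length of the longest common prefix. -/
def remLcp {γ : Type} [DecidableEq γ] : List γ → List γ → ℕ
  | x :: A, y :: B => if x = y then remLcp A B + 1 else 0
  | [], _ => 0
  | _ :: _, [] => 0

theorem remLcp_hyp {γ : Type} [DecidableEq γ] (A B C : List γ) (h : remLcp A B < remLcp B C) :
    remLcp A C ≤ remLcp A B := by
  induction A generalizing B C with
  | nil => simp [remLcp]
  | cons a A ih =>
    cases B with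
    | nil => simp [remLcp] at h
    | cons b B =>
      cases C with
      | nil => simp [remLcp]
      | cons c C =>
        simp only [remLcp] at h ⊢
        by_cases hbc : b = c
        · subst hbc
          by_cases hab : a = b
          · simp only [hab, if_true] at h ⊢
            have := ih B C (by omega)
            omega
          · simp [hab]
        · simp [hbc] at h

theorem remLcp_reduce {β : Type} [DecidableEq β] (A B : List (β × Bool))
    (hA : FreeGroup.IsReduced A) (hB : FreeGroup.IsReduced B) :
    FreeGroup.norm ((FreeGroup.mk A)⁻¹ * FreeGroup.mk B) + 2 * remLcp A B
      = A.length + B.length := by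
  induction A generalizing B with
  | nil =>
    have h1 : FreeGroup.mk ([] : List (β × Bool)) = 1 := rfl
    simp [remLcp, h1, FreeGroup.norm, hB.reduce_eq]
  | cons a A ih =>
    cases B with
    | nil =>
      have h1 : FreeGroup.mk ([] : List (β × Bool)) = 1 := rfl
      rw [h1, mul_one, FreeGroup.norm_inv_eq]
      simp [remLcp, FreeGroup.norm, hA.reduce_eq]
    | cons b B =>
      by_cases hab : a = b
      · subst hab
        have h2 : ∀ L : List (β × Bool),
            FreeGroup.mk (a :: L) = FreeGroup.mk [a] * FreeGroup.mk L := fun L => by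
          simp [FreeGroup.mul_mk]
        have := ih B (hA.infix ⟨[a], [], by simp⟩) (hB.infix ⟨[a], [], by simp⟩)
        rw [h2 A, h2 B]
        simp only [remLcp, mul_inv_rev, mul_assoc, inv_mul_cancel_left, if_true, List.length_cons]
        omega
      · have hr : FreeGroup.IsReduced (FreeGroup.invRev (a :: A) ++ b :: B) := by
          have hA' : FreeGroup.IsReduced (FreeGroup.invRev (a :: A)) := by
            rw [FreeGroup.isReduced_iff_reduce_eq, FreeGroup.reduce_invRev, hA.reduce_eq]
          unfold FreeGroup.IsReduced at *
          rw [List.isChain_append]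
          refine ⟨hA', hB, ?_⟩
          rintro x hx y hy
          simp [FreeGroup.invRev] at hx hy
          subst hx hy
          rcases a with ⟨a1, a2⟩
          rcases b with ⟨b1, b2⟩
          simp only [Prod.mk.injEq] at hab ⊢
          intro h
          cases a2 <;> cases b2 <;> simp_all
        rw [FreeGroup.inv_mk, FreeGroup.mul_mk, FreeGroup.norm, FreeGroup.toWord_mk, hr.reduce_eq]
        simp [remLcp, hab]

/-- Exact cancellation. -/
def remC {β : Type} [DecidableEq β] (x y : FreeGroup β) : ℕ := remLcp x⁻¹.toWord y.toWord

theorem remC_norm {β : Type} [DecidableEq β] (x y : FreeGroup β) :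
    FreeGroup.norm (x * y) + 2 * remC x y = FreeGroup.norm x + FreeGroup.norm y := by
  have := remLcp_reduce x⁻¹.toWord y.toWord FreeGroup.isReduced_toWord FreeGroup.isReduced_toWord
  rw [FreeGroup.mk_toWord, FreeGroup.mk_toWord, inv_inv] at this
  rw [remC, this, ← FreeGroup.norm, ← FreeGroup.norm, FreeGroup.norm_inv_eq]

theorem cancelLen_eq {β : Type} [DecidableEq β] (x y : FreeGroup β) :
    cancelLen x y = remC x y := by
  have := remC_norm x y
  unfold cancelLen
  omega

theorem remC_inv {β : Type} [DecidableEq β] (x y : FreeGroup β) :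
    remC y⁻¹ x⁻¹ = remC x y := by
  have h1 := remC_norm x y
  have h2 := remC_norm y⁻¹ x⁻¹
  rw [← mul_inv_rev] at h2
  simp only [FreeGroup.norm_inv_eq] at h2
  omega

/-- Right cancellation bound of a signed letter. -/
def remR {β : Type} [DecidableEq β] {N : ℕ} (t : Fin N → FreeGroup β) (s : Fin N × Bool) : ℕ :=
  if s.2 then rightCancel t s.1 else leftCancel t s.1

theorem remC_le_right {β : Type} [DecidableEq β] {N : ℕ} (t : Fin N → FreeGroup β)
    (i : Fin N) (s : Fin N × Bool) (h : ¬ (s.1 = i ∧ s.2 = false)) :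
    remC (t i) (pmPow s.2 (t s.1)) ≤ rightCancel t i := by
  have := Finset.le_sup (f := fun p : Fin N × Bool =>
    if p.1 = i ∧ p.2 = false then 0 else cancelLen (t i) (pmPow p.2 (t p.1))) (Finset.mem_univ s)
  simp only [h, if_false, cancelLen_eq] at this
  simpa only [rightCancel, cancelLen_eq] using this

theorem remC_le_left {β : Type} [DecidableEq β] {N : ℕ} (t : Fin N → FreeGroup β)
    (i : Fin N) (s : Fin N × Bool) (h : ¬ (s.1 = i ∧ s.2 = false)) :
    remC (pmPow s.2 (t s.1)) (t i) ≤ leftCancel t i := by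
  have := Finset.le_sup (f := fun p : Fin N × Bool =>
    if p.1 = i ∧ p.2 = false then 0 else cancelLen (pmPow p.2 (t p.1)) (t i)) (Finset.mem_univ s)
  simp only [h, if_false, cancelLen_eq] at this
  simpa only [leftCancel, cancelLen_eq] using this

theorem pmPow_not {β : Type} [DecidableEq β] (b : Bool) (x : FreeGroup β) :
    pmPow (!b) x = (pmPow b x)⁻¹ := by
  cases b <;> simp [pmPow]

theorem remC_le_R {β : Type} [DecidableEq β] {N : ℕ} (t : Fin N → FreeGroup β)
    (s u : Fin N × Bool) (h : s.1 = u.1 → s.2 = u.2) :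
    remC (pmPow s.2 (t s.1)) (pmPow u.2 (t u.1)) ≤ remR t s := by
  rcases s with ⟨i, _ | _⟩
  · have := remC_le_left t i (u.1, !u.2) (by grind)
    rw [← remC_inv] at this
    simp only [pmPow_not, inv_inv] at this
    simpa [remR, pmPow] using this
  · have := remC_le_right t i u (by grind)
    simpa [remR, pmPow] using this

theorem remC_le_L {β : Type} [DecidableEq β] {N : ℕ} (t : Fin N → FreeGroup β)
    (s u : Fin N × Bool) (h : s.1 = u.1 → s.2 = u.2) :
    remC (pmPow s.2 (t s.1)) (pmPow u.2 (t u.1)) ≤ remR t (u.1, !u.2) := by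
  have := remC_le_R t (u.1, !u.2) (s.1, !s.2) (by grind)
  rwa [pmPow_not, pmPow_not, remC_inv] at this

theorem rem_norm {β : Type} [DecidableEq β] {N : ℕ} (t : Fin N → FreeGroup β)
    (ht : HasRemnant t) (s : Fin N × Bool) :
    remR t s + remR t (s.1, !s.2) < FreeGroup.norm (pmPow s.2 (t s.1)) := by
  have := ht s.1
  unfold remLen at this
  rcases s with ⟨i, _ | _⟩ <;> simp [remR, pmPow] at this ⊢ <;> omega

theorem rem_main {β : Type} [DecidableEq β] {N : ℕ} (t : Fin N → FreeGroup β)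
    (ht : HasRemnant t) (s : Fin N × Bool) (l : List (Fin N × Bool))
    (hl : FreeGroup.IsReduced (s :: l)) :
    remC (pmPow s.2 (t s.1)) ((l.map fun u => pmPow u.2 (t u.1)).prod) ≤ remR t s := by
  induction l generalizing s with
  | nil =>
    have := remC_norm (pmPow s.2 (t s.1)) 1
    simp at this
    simp [this]
  | cons u l ih =>
    have hsu : s.1 = u.1 → s.2 = u.2 := by
      unfold FreeGroup.IsReduced at hl
      exact (List.isChain_cons_cons.1 hl).1
    have h1 := ih u (hl.infix ⟨[s], [], by simp⟩)
    have h2 := remC_le_L t s u hsu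
    have h3 := remC_le_R t s u hsu
    have h4 := rem_norm t ht u
    simp only [List.map_cons, List.prod_cons]
    generalize (l.map fun u => pmPow u.2 (t u.1)).prod = z at *
    generalize pmPow s.2 (t s.1) = x at *
    generalize pmPow u.2 (t u.1) = y at *
    refine le_trans ?_ h3
    apply remLcp_hyp
    have h5 := remC_norm y⁻¹ (y * z)
    have h6 := remC_norm y z
    rw [inv_mul_cancel_left, FreeGroup.norm_inv_eq] at h5
    have h7 : remC y⁻¹ (y * z) = remLcp y.toWord (y * z).toWord := by
      rw [remC, inv_inv]
    rw [← h7]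
    change remC x y < _
    omega

/-- A homomorphism of free groups with remnant is injective. -/
theorem injective_of_remnant {n : ℕ} {β : Type} [DecidableEq β]
    (φ : FreeGroup (Fin n) →* FreeGroup β)
    (hrem : HasRemnant fun i : Fin n => φ (FreeGroup.of i)) :
    Function.Injective φ := by
  rw [injective_iff_map_eq_one]
  intro w hw
  have key : ∀ l : List (Fin n × Bool), φ (FreeGroup.mk l)
      = (l.map fun u => pmPow u.2 (φ (FreeGroup.of u.1))).prod := by
    intro l
    induction l with
    | nil => exact map_one φ
    | cons a l ih =>
      have h2 : FreeGroup.mk (a :: l) = FreeGroup.mk [a] * FreeGroup.mk l := by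
        simp [FreeGroup.mul_mk]
      rw [h2, map_mul, ih, List.map_cons, List.prod_cons]
      congr 1
      rcases a with ⟨i, _ | _⟩
      · have : FreeGroup.mk [(i, false)] = (FreeGroup.of i)⁻¹ := rfl
        simp [pmPow, this]
      · rfl
  rw [← FreeGroup.toWord_eq_nil_iff]
  have hred : FreeGroup.IsReduced w.toWord := FreeGroup.isReduced_toWord
  rw [← FreeGroup.mk_toWord (x := w), key] at hw
  generalize w.toWord = l at *
  cases l with
  | nil => rfl
  | cons s l =>
    exfalso
    have h1 := rem_main _ hrem s l hred
    have h2 := rem_norm _ hrem s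
    simp only [List.map_cons, List.prod_cons] at hw
    generalize (l.map fun u => pmPow u.2 (φ (FreeGroup.of u.1))).prod = z at *
    have h3 := remC_norm (pmPow s.2 (φ (FreeGroup.of s.1))) z
    have h4 : z = (pmPow s.2 (φ (FreeGroup.of s.1)))⁻¹ := eq_inv_of_mul_eq_one_right hw
    have h5 : FreeGroup.norm z = FreeGroup.norm (pmPow s.2 (φ (FreeGroup.of s.1))) := by
      rw [h4, FreeGroup.norm_inv_eq]
    rw [hw, FreeGroup.norm_one] at h3
    omega
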